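/- Let T = wT_φ on C(K) with φ a homeomorphism of K into itself and φ(K) ≠ K. Set L = ⋂_{n≥0} φⁿ(K) and M = K \ Int_K(L). Then the spectrum of T satisfies σ(T) = σ(T, C(M)) ∪ σ(T, C(L)), where T acts on C(L) and C(M) via the same formula. -/

import Mathlib

open Filter Topology

/-- The product `w(x) w(φ x) ⋯ w(φⁿ⁻¹ x)` of the weight along an orbit segment. -/
def orbitWeight {X : Type*} (φ : X → X) (w : X → ℂ) (n : ℕ) (x : X) : ℂ :=
  ∏ i ∈ Finset.range n, w (φ^[i] x)

/-- On `S`, the products of the weight along orbits decay geometrically at a rate less than `r`. -/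
def OrbitWeightDecay {X : Type*} (φ : X → X) (w : X → ℂ) (r : ℝ) (S : Set X) : Prop :=
  ∃ C ρ : ℝ, 0 ≤ ρ ∧ ρ < r ∧ ∀ x ∈ S, ∀ n, ‖orbitWeight φ w n x‖ ≤ C * ρ ^ n

theorem OrbitWeightDecay.closure {X : Type*} [TopologicalSpace X] {φ : X → X} {w : X → ℂ}
    {r : ℝ} {S : Set X} (h : OrbitWeightDecay φ w r S) (hφ : Continuous φ) (hw : Continuous w) :
    OrbitWeightDecay φ w r (closure S) := by
  obtain ⟨C, ρ, hρ, hρr, hS⟩ := h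
  refine ⟨C, ρ, hρ, hρr, fun x hx n => ?_⟩
  have hcont : Continuous (orbitWeight φ w n) :=
    continuous_finsetProd _ fun i _ => hw.comp (hφ.iterate i)
  have hclosed : IsClosed {x | ‖orbitWeight φ w n x‖ ≤ C * ρ ^ n} :=
    isClosed_le hcont.norm continuous_const
  exact closure_minimal (fun y hy => hS y hy n) hclosed hx

/-- Under geometric decay at rate less than `‖c‖`, a bounded solution of `c f = w (f ∘ φ)` on an
invariant set vanishes. -/
theorem OrbitWeightDecay.eq_zero {X : Type*} {φ : X → X} {w : X → ℂ} {c : ℂ} {S : Set X}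
    (h : OrbitWeightDecay φ w ‖c‖ S) (hS : Set.MapsTo φ S S) {f : X → ℂ} {B : ℝ}
    (hB : ∀ x ∈ S, ‖f x‖ ≤ B) (hf : ∀ x ∈ S, c * f x = w x * f (φ x)) :
    ∀ x ∈ S, f x = 0 := by
  obtain ⟨C, ρ, hρ, hρr, hdecay⟩ := h
  intro x hx
  have hc : 0 < ‖c‖ := hρ.trans_lt hρr
  have hiter (n : ℕ) : c ^ n * f x = orbitWeight φ w n x * f (φ^[n] x) := by
    induction n with
    | zero => simp [orbitWeight]
    | succ n ih =>
      have hstep : orbitWeight φ w (n + 1) x = orbitWeight φ w n x * w (φ^[n] x) :=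
        Finset.prod_range_succ _ _
      rw [pow_succ', mul_assoc, ih, hstep, Function.iterate_succ_apply', mul_assoc,
        ← hf _ (hS.iterate n hx)]
      ring
  have hbound (n : ℕ) : ‖f x‖ ≤ C * B * (ρ / ‖c‖) ^ n := by
    have h1 : ‖c‖ ^ n * ‖f x‖ ≤ C * ρ ^ n * B := by
      rw [← norm_pow, ← norm_mul, hiter, norm_mul]
      exact mul_le_mul (hdecay x hx n) (hB _ (hS.iterate n hx)) (norm_nonneg _)
        ((norm_nonneg _).trans (hdecay x hx n))
    rw [div_pow, mul_div_assoc', le_div_iff₀ (by positivity)]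
    linarith
  have hlim : Tendsto (fun n : ℕ => C * B * (ρ / ‖c‖) ^ n) atTop (𝓝 (C * B * 0)) :=
    (tendsto_pow_atTop_nhds_zero_of_lt_one (by positivity)
      ((div_lt_one hc).2 hρr)).const_mul _
  have := ge_of_tendsto' hlim hbound
  simpa using this

theorem norm_pow_le_opNorm_pow_of_mem_spectrum {E : Type*} [NormedAddCommGroup E]
    [NormedSpace ℂ E] [CompleteSpace E] {S : E →L[ℂ] E} {c : ℂ} (hc : c ∈ spectrum ℂ S) (n : ℕ) :
    ‖c‖ ^ n ≤ ‖S ^ n‖ := by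
  rw [← norm_pow]
  exact (spectrum.norm_le_norm_mul_of_mem (spectrum.pow_mem_pow S n hc)).trans
    (mul_le_of_le_one_right (norm_nonneg _) ContinuousLinearMap.norm_id_le)

section WeightedComposition

variable {X : Type*} [TopologicalSpace X] [CompactSpace X] {φ : X → X} {w : X → ℂ}
  {T : C(X, ℂ) →L[ℂ] C(X, ℂ)}

theorem weightedComp_pow_apply (hT : ∀ (f : C(X, ℂ)) (x : X), T f x = w x * f (φ x)) (n : ℕ)
    (f : C(X, ℂ)) (x : X) : (T ^ n) f x = orbitWeight φ w n x * f (φ^[n] x) := by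
  induction n generalizing f with
  | zero => simp [orbitWeight]
  | succ n ih =>
    rw [pow_succ, mul_apply_eq_comp, ih, hT, orbitWeight, orbitWeight,
      Finset.prod_range_succ, Function.iterate_succ_apply', mul_assoc]

theorem notMem_spectrum_of_orbitWeightDecay
    (hT : ∀ (f : C(X, ℂ)) (x : X), T f x = w x * f (φ x)) {c : ℂ}
    (h : OrbitWeightDecay φ w ‖c‖ Set.univ) : c ∉ spectrum ℂ T := by
  obtain ⟨C, ρ, hρ, hρr, hdecay⟩ := h
  intro hmem
  have hc : 0 < ‖c‖ := hρ.trans_lt hρr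
  have hpow (n : ℕ) : ‖T ^ n‖ ≤ |C| * ρ ^ n := by
    refine ContinuousLinearMap.opNorm_le_bound _ (by positivity) fun f => ?_
    rw [ContinuousMap.norm_le _ (by positivity)]
    intro x
    rw [weightedComp_pow_apply hT, norm_mul]
    have h1 : ‖orbitWeight φ w n x‖ ≤ |C| * ρ ^ n :=
      (hdecay x (Set.mem_univ x) n).trans
        (mul_le_mul_of_nonneg_right (le_abs_self C) (pow_nonneg hρ n))
    have h2 : ‖f (φ^[n] x)‖ ≤ ‖f‖ := f.norm_coe_le_norm _
    exact mul_le_mul h1 h2 (norm_nonneg _) (by positivity)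
  have hbound (n : ℕ) : 1 ≤ |C| * (ρ / ‖c‖) ^ n := by
    rw [div_pow, mul_div_assoc', le_div_iff₀ (by positivity), one_mul]
    exact (norm_pow_le_opNorm_pow_of_mem_spectrum hmem n).trans (hpow n)
  have hlim : Tendsto (fun n : ℕ => |C| * (ρ / ‖c‖) ^ n) atTop (𝓝 (|C| * 0)) :=
    (tendsto_pow_atTop_nhds_zero_of_lt_one (by positivity)
      ((div_lt_one hc).2 hρr)).const_mul _
  have := ge_of_tendsto' hlim hbound
  norm_num at this

theorem notMem_spectrum_iff_bijective {c : ℂ} :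
    c ∉ spectrum ℂ T ↔ Function.Bijective fun f => c • f - T f := by
  rw [spectrum.notMem_iff, ContinuousLinearMap.isUnit_iff_bijective]
  rfl

variable [T2Space X]

theorem exists_continuous_eq_one_eqOn_zero {s : Set X} (hs : IsClosed s) {x : X} (hx : x ∉ s) :
    ∃ g : C(X, ℂ), g x = 1 ∧ Set.EqOn g 0 s ∧ ‖g‖ ≤ 1 := by
  obtain ⟨u, hu0, hu1, hu⟩ := exists_continuous_zero_one_of_isClosed hs
    (isClosed_singleton (x := x)) (Set.disjoint_singleton_right.2 hx)
  refine ⟨⟨fun y => (u y : ℂ), by fun_prop⟩, ?_, fun y hy => ?_, ?_⟩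
  · simpa using hu1 (Set.mem_singleton x)
  · simpa using hu0 hy
  · rw [ContinuousMap.norm_le _ zero_le_one]
    intro y
    simpa [abs_of_nonneg (hu y).1] using (hu y).2

theorem zero_mem_spectrum_weightedComp (hφ : Continuous φ)
    (hT : ∀ (f : C(X, ℂ)) (x : X), T f x = w x * f (φ x)) {x : X} (hx : x ∉ Set.range φ) :
    0 ∈ spectrum ℂ T := by
  by_contra h
  obtain ⟨g, hgx, hg0, -⟩ :=
    exists_continuous_eq_one_eqOn_zero (isCompact_range hφ).isClosed hx
  have hg : g = 0 := by
    apply (notMem_spectrum_iff_bijective.1 h).1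
    ext y
    simp [hT, hg0 (Set.mem_range_self y)]
  simp [hg] at hgx

/-- A bounded left inverse `R` of `c - T` controls the orbit products of the weight off `⋂ φⁿ(X)`. -/
theorem norm_orbitWeight_le_of_leftInverse (hφ : Continuous φ) (hφi : Function.Injective φ)
    (hT : ∀ (f : C(X, ℂ)) (x : X), T f x = w x * f (φ x)) {c : ℂ} (hc : c ≠ 0)
    {R : C(X, ℂ) →L[ℂ] C(X, ℂ)} (hR : ∀ f, R (c • f - T f) = f) {x : X}
    (hx : x ∉ ⋂ n : ℕ, Set.range φ^[n]) (n : ℕ) :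
    ‖orbitWeight φ w n x‖ ≤ ‖R‖ * ‖c‖ * ‖c‖ ^ n := by
  have hanti : ∀ {a b : ℕ}, a ≤ b → Set.range φ^[b] ⊆ Set.range φ^[a] := by
    rintro a b hab _ ⟨y, rfl⟩
    exact ⟨φ^[b - a] y, by rw [← Function.iterate_add_apply, Nat.add_sub_cancel' hab]⟩
  obtain ⟨m, hm, hm'⟩ : ∃ m, x ∈ Set.range φ^[m] ∧ x ∉ Set.range φ^[m + 1] := by
    by_contra! hcon
    refine hx (Set.mem_iInter.2 fun k => ?_)
    induction k with
    | zero => simp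
    | succ k ih => exact hcon k ih
  have hin (i : ℕ) : φ^[i] x ∈ Set.range φ^[m + i] := by
    obtain ⟨y, rfl⟩ := hm
    exact ⟨y, by rw [← Function.iterate_add_apply, add_comm]⟩
  have hout (i : ℕ) : φ^[i] x ∉ Set.range φ^[m + i + 1] := by
    rintro ⟨y, hy⟩
    refine hm' ⟨y, hφi.iterate i ?_⟩
    rw [← hy, ← Function.iterate_add_apply, show i + (m + 1) = m + i + 1 by omega]
  obtain ⟨g, hg1, hg0, hg⟩ := exists_continuous_eq_one_eqOn_zero (x := φ^[n] x)
    (s := Set.range φ^[m + n + 1] ∪ (fun i => φ^[i] x) '' Set.Iio n)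
    ((isCompact_range (hφ.iterate _)).isClosed.union
      ((Set.finite_Iio n).image _).isClosed) (by
      rintro (h | ⟨i, hi, h⟩)
      · exact hout n h
      · have hi' : i < n := hi
        refine hout i (hanti (by omega : m + i + 1 ≤ m + n) ?_)
        have h' : φ^[i] x = φ^[n] x := h
        exact h' ▸ hin n)
  have htel (N : ℕ) : c • (∑ i ∈ Finset.range N, (c⁻¹ ^ (i + 1)) • (T ^ i) g) -
      T (∑ i ∈ Finset.range N, (c⁻¹ ^ (i + 1)) • (T ^ i) g) = g - c⁻¹ ^ N • (T ^ N) g := by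
    induction N with
    | zero => simp
    | succ N ih =>
      rw [Finset.sum_range_succ, map_add, smul_add, add_sub_add_comm, ih, map_smul, smul_smul,
        pow_succ' c⁻¹ N, mul_inv_cancel_left₀ hc, pow_succ' T, mul_apply_eq_comp]
      abel
  have hkill : (T ^ (m + n + 1)) g = 0 := by
    ext y
    rw [weightedComp_pow_apply hT, hg0 (Or.inl (Set.mem_range_self y))]
    simp
  have hsum := htel (m + n + 1)
  rw [hkill, smul_zero, sub_zero] at hsum
  have hRg := hR (∑ i ∈ Finset.range (m + n + 1), (c⁻¹ ^ (i + 1)) • (T ^ i) g)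
  rw [hsum] at hRg
  have hval : R g x = c⁻¹ ^ (n + 1) * orbitWeight φ w n x := by
    rw [hRg, ContinuousMap.sum_apply, Finset.sum_eq_single n]
    · rw [ContinuousMap.smul_apply, weightedComp_pow_apply hT, hg1, mul_one, smul_eq_mul]
    · intro i _ hin'
      have hz : g (φ^[i] x) = 0 := by
        rcases lt_or_gt_of_ne hin' with h | h
        · exact hg0 (Or.inr ⟨i, h, rfl⟩)
        · exact hg0 (Or.inl (hanti (by omega) (hin i)))
      rw [ContinuousMap.smul_apply, weightedComp_pow_apply hT, hz, mul_zero, smul_zero]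
    · intro h
      exact absurd (Finset.mem_range.2 (by omega)) h
  have hle : ‖R g x‖ ≤ ‖R‖ :=
    ((R g).norm_coe_le_norm x).trans ((R.le_opNorm g).trans
      (mul_le_of_le_one_right (norm_nonneg _) hg))
  rw [hval, norm_mul, norm_pow, norm_inv, inv_pow, inv_mul_le_iff₀ (by positivity)] at hle
  calc _ ≤ _ := hle
    _ = _ := by ring

/-- If `c` is in the resolvent set of a weighted composition operator with non-surjective injective
symbol, then the orbit products of the weight decay at a rate less than `‖c‖` off `⋂ φⁿ(X)`. -/
theorem orbitWeightDecay_of_notMem_spectrum (hφ : Continuous φ) (hφi : Function.Injective φ)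
    (hφs : ¬ Function.Surjective φ) (hT : ∀ (f : C(X, ℂ)) (x : X), T f x = w x * f (φ x)) {c : ℂ}
    (hc : c ∉ spectrum ℂ T) :
    OrbitWeightDecay φ w ‖c‖ (⋂ n : ℕ, Set.range φ^[n])ᶜ := by
  have hc0 : c ≠ 0 := by
    rintro rfl
    obtain ⟨x, hx⟩ := not_forall.1 hφs
    exact hc (zero_mem_spectrum_weightedComp hφ hT hx)
  have hev : ∀ᶠ t : ℝ in 𝓝 1, (t : ℂ) * c ∈ resolventSet ℂ T := by
    have hcont : Continuous fun t : ℝ => (t : ℂ) * c := by fun_prop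
    refine hcont.continuousAt.eventually_mem ((spectrum.isOpen_resolventSet T).mem_nhds ?_)
    simpa using not_not.1 hc
  obtain ⟨t, ht, ht0, ht1⟩ : ∃ t : ℝ, (t : ℂ) * c ∈ resolventSet ℂ T ∧ 0 < t ∧ t < 1 :=
    ((hev.filter_mono nhdsWithin_le_nhds).and
      (Ioo_mem_nhdsLT (zero_lt_one (α := ℝ)))).exists (f := 𝓝[<] (1 : ℝ))
  have htc : (t : ℂ) * c ≠ 0 := mul_ne_zero (by exact_mod_cast ht0.ne') hc0
  obtain ⟨R, hR⟩ := (spectrum.mem_resolventSet_iff.1 ht).exists_left_inv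
  refine ⟨‖R‖ * ‖(t : ℂ) * c‖, ‖(t : ℂ) * c‖, norm_nonneg _, ?_, fun x hx n =>
    norm_orbitWeight_le_of_leftInverse hφ hφi hT htc (fun f => DFunLike.congr_fun hR f) hx n⟩
  rw [norm_mul, Complex.norm_of_nonneg ht0.le]
  exact mul_lt_of_lt_one_left (norm_pos_iff.2 hc0) ht1

end WeightedComposition

theorem ContinuousMap.exists_glue_of_isClosed {X Y : Type*} [TopologicalSpace X]
    [TopologicalSpace Y] {A B : Set X} (hA : IsClosed A) (hB : IsClosed B)
    (hAB : A ∪ B = Set.univ) (f : C(A, Y)) (g : C(B, Y))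
    (hfg : ∀ x (ha : x ∈ A) (hb : x ∈ B), f ⟨x, ha⟩ = g ⟨x, hb⟩) :
    ∃ F : C(X, Y), (∀ a : A, F a = f a) ∧ ∀ b : B, F b = g b := by
  classical
  have hB' : ∀ x, x ∉ A → x ∈ B := fun x hx =>
    (hAB.symm ▸ Set.mem_univ x : x ∈ A ∪ B).resolve_left hx
  let F : X → Y := fun x => if h : x ∈ A then f ⟨x, h⟩ else g ⟨x, hB' x h⟩
  have hFA (a : A) : F a = f a := by simp [F]
  have hFB (b : B) : F b = g b := by
    by_cases h : (b : X) ∈ A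
    · simp only [F, h, dif_pos]
      exact hfg b h b.2
    · simp [F, h]
  refine ⟨⟨F, continuous_iff_isClosed.2 fun s hs => ?_⟩, hFA, hFB⟩
  have : F ⁻¹' s = (↑) '' (f ⁻¹' s) ∪ (↑) '' (g ⁻¹' s) := by
    ext x
    constructor
    · intro hx
      by_cases h : x ∈ A
      · exact Or.inl ⟨⟨x, h⟩, by simpa [← hFA] using hx, rfl⟩
      · exact Or.inr ⟨⟨x, hB' x h⟩, by simpa [← hFB] using hx, rfl⟩
    · rintro (⟨a, ha, rfl⟩ | ⟨b, hb, rfl⟩)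
      · simpa [hFA] using ha
      · simpa [hFB] using hb
  rw [this]
  exact (hA.isClosedMap_subtype_val _ (hs.preimage f.continuous)).union
    (hB.isClosedMap_subtype_val _ (hs.preimage g.continuous))

theorem orbitWeight_restrict {X : Type*} {φ : X → X} {S : Set X} (hS : Set.MapsTo φ S S)
    (w : X → ℂ) (n : ℕ) (x : S) :
    orbitWeight (hS.restrict φ S S) (fun y => w y) n x = orbitWeight φ w n x := by
  refine Finset.prod_congr rfl fun i _ => ?_
  rw [hS.iterate_restrict]
  rfl

/-- `σ(T) = σ(T, C(M)) ∪ σ(T, C(L))` where `L = ⋂ φⁿ(K)` and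
`M = K \ Int_K L`. -/
theorem stmt2 (K : Type*) [TopologicalSpace K] [CompactSpace K] [T2Space K]
    (φ : K → K) (hφc : Continuous φ) (hφi : Function.Injective φ)
    (hns : Set.range φ ≠ Set.univ)
    (w : C(K, ℂ)) (T : C(K, ℂ) →L[ℂ] C(K, ℂ))
    (hT : ∀ (f : C(K, ℂ)) (k : K), T f k = w k * f (φ k))
    (L M : Set K) [CompactSpace L] [CompactSpace M]
    (hL : L = ⋂ n : ℕ, φ^[n] '' Set.univ)
    (hM : M = (interior L)ᶜ)
    (hφL : ∀ k ∈ L, φ k ∈ L) (hφM : ∀ k ∈ M, φ k ∈ M)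
    (TL : C(L, ℂ) →L[ℂ] C(L, ℂ))
    (hTL : ∀ (f : C(L, ℂ)) (k : L), TL f k = w k.1 * f ⟨φ k.1, hφL k.1 k.2⟩)
    (TM : C(M, ℂ) →L[ℂ] C(M, ℂ))
    (hTM : ∀ (f : C(M, ℂ)) (k : M), TM f k = w k.1 * f ⟨φ k.1, hφM k.1 k.2⟩) :
    spectrum ℂ T = spectrum ℂ TM ∪ spectrum ℂ TL := by
  have hLr : L = ⋂ n : ℕ, Set.range φ^[n] := by simpa only [Set.image_univ] using hL
  have hLclosed : IsClosed L := (isCompact_iff_compactSpace.2 inferInstance).isClosed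
  have hMclosed : IsClosed M := (isCompact_iff_compactSpace.2 inferInstance).isClosed
  have hMcl : M = closure Lᶜ := by rw [hM, closure_compl]
  have hLM : Lᶜ ⊆ M := hMcl ▸ subset_closure
  have hcover : M ∪ L = Set.univ :=
    Set.eq_univ_of_forall fun x => (em (x ∈ L)).elim Or.inr fun h => Or.inl (hLM h)
  have hφs : ¬ Function.Surjective φ := fun h => hns h.range_eq
  have hmaps : Set.MapsTo φ M M := hφM
  have hmapsML : Set.MapsTo φ (M ∩ L) (M ∩ L) := fun k hk => ⟨hφM k hk.1, hφL k hk.2⟩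
  have hdecayK {c : ℂ} (hc : c ∉ spectrum ℂ T) : OrbitWeightDecay φ w ‖c‖ M := by
    have h := orbitWeightDecay_of_notMem_spectrum hφc hφi hφs hT hc
    rw [← hLr] at h
    rw [hMcl]
    exact h.closure hφc w.continuous
  have hdecayM {c : ℂ} (hc : c ∉ spectrum ℂ TM) : OrbitWeightDecay φ w ‖c‖ M := by
    have hsM : ¬ Function.Surjective (hmaps.restrict φ M M) := by
      intro hsurj
      obtain ⟨x, hx⟩ := not_forall.1 hφs
      have hxL : x ∉ L := fun h => hx (by
        rw [hLr, Set.mem_iInter] at h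
        simpa using h 1)
      obtain ⟨y, hy⟩ := hsurj ⟨x, hLM hxL⟩
      exact hx ⟨y, congrArg Subtype.val hy⟩
    obtain ⟨C, ρ, hρ, hρr, h⟩ := orbitWeightDecay_of_notMem_spectrum (hφc.restrict hmaps)
      (hmaps.restrict_inj.2 hφi.injOn) hsM (w := fun y : M => w y) hTM hc
    rw [hMcl]
    refine OrbitWeightDecay.closure ⟨C, ρ, hρ, hρr, fun x hx n => ?_⟩ hφc w.continuous
    rw [← orbitWeight_restrict hmaps w n ⟨x, hLM hx⟩]
    refine h _ (fun hmem => hx ?_) n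
    rw [hLr, Set.mem_iInter]
    intro i
    obtain ⟨y, hy⟩ := Set.mem_iInter.1 hmem i
    refine ⟨y, ?_⟩
    rw [hmaps.iterate_restrict] at hy
    exact congrArg Subtype.val hy
  have hzero {c : ℂ} (h : OrbitWeightDecay φ w ‖c‖ M) {f : C(L, ℂ)}
      (hf : ∀ k (hk : k ∈ M ∩ L), c * f ⟨k, hk.2⟩ = w k * f ⟨φ k, hφL k hk.2⟩) :
      ∀ k (hk : k ∈ M ∩ L), f ⟨k, hk.2⟩ = 0 := by
    obtain ⟨F, hF⟩ := ContinuousMap.exists_restrict_eq hLclosed f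
    have hFf (k : K) (hk : k ∈ L) : F k = f ⟨k, hk⟩ := DFunLike.congr_fun hF ⟨k, hk⟩
    obtain ⟨C, ρ, hρ, hρr, hdecay⟩ := h
    have hML : OrbitWeightDecay φ w ‖c‖ (M ∩ L) := ⟨C, ρ, hρ, hρr, fun x hx => hdecay x hx.1⟩
    intro k hk
    rw [← hFf]
    refine hML.eq_zero hmapsML (fun x _ => F.norm_coe_le_norm x) (fun x hx => ?_) k hk
    rw [hFf x hx.2, hFf _ (hφL x hx.2), hf x hx]
  have hiff (c : ℂ) : c ∉ spectrum ℂ T ↔ c ∉ spectrum ℂ TM ∧ c ∉ spectrum ℂ TL := by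
    constructor
    · intro hc
      have hdecay := hdecayK hc
      rw [notMem_spectrum_iff_bijective] at hc
      refine ⟨?_, notMem_spectrum_iff_bijective.2 ⟨?_, fun g => ?_⟩⟩
      · refine notMem_spectrum_of_orbitWeightDecay (φ := hmaps.restrict φ M M)
          (w := fun y : M => w y) hTM ?_
        obtain ⟨C, ρ, hρ, hρr, h⟩ := hdecay
        refine ⟨C, ρ, hρ, hρr, fun x _ n => ?_⟩
        rw [orbitWeight_restrict hmaps w n x]
        exact h x x.2 n
      · intro f₁ f₂ hf₁₂
        rw [← sub_eq_zero]
        set f := f₁ - f₂ with hfdef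
        have hf (k : L) : c * f k = w k * f ⟨φ k, hφL k k.2⟩ := by
          have h := DFunLike.congr_fun hf₁₂ k
          simp only [ContinuousMap.sub_apply, ContinuousMap.smul_apply, smul_eq_mul, hTL] at h
          simp only [hfdef, ContinuousMap.sub_apply]
          linear_combination h
        have hf0 := hzero hdecay (f := f) fun k hk => hf ⟨k, hk.2⟩
        obtain ⟨F, hFM, hFL⟩ := ContinuousMap.exists_glue_of_isClosed hMclosed hLclosed hcover 0 f
          fun k hkM hkL => (hf0 k ⟨hkM, hkL⟩).symm
        have hF : F = 0 := by
          apply hc.1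
          ext k
          simp only [ContinuousMap.sub_apply, ContinuousMap.smul_apply, smul_eq_mul, hT,
            ContinuousMap.zero_apply, map_zero, mul_zero, sub_zero, sub_eq_zero]
          rcases (hcover.symm ▸ Set.mem_univ k : k ∈ M ∪ L) with hk | hk
          · have h1 := hFM ⟨k, hk⟩
            have h2 := hFM ⟨φ k, hφM k hk⟩
            simp only [ContinuousMap.zero_apply] at h1 h2
            rw [h1, h2, mul_zero, mul_zero]
          · have h1 := hFL ⟨k, hk⟩
            have h2 := hFL ⟨φ k, hφL k hk⟩
            simp only at h1 h2
            rw [h1, h2]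
            exact hf ⟨k, hk⟩
        ext k
        rw [← hFL, hF]
        rfl
      · obtain ⟨G, hG⟩ := ContinuousMap.exists_restrict_eq hLclosed g
        obtain ⟨F, hF⟩ := hc.2 G
        refine ⟨F.restrict L, ?_⟩
        ext k
        have h : (c • F - T F) k = G k := DFunLike.congr_fun hF (k : K)
        have h' : G k = g k := DFunLike.congr_fun hG k
        simp only [ContinuousMap.sub_apply, ContinuousMap.smul_apply, smul_eq_mul, hT, hTL,
          ContinuousMap.restrict_apply] at h ⊢
        rw [h, h']
    · rintro ⟨hcM, hcL⟩
      have hdecay := hdecayM hcM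
      rw [notMem_spectrum_iff_bijective] at hcM hcL
      have hM_apply (f : C(K, ℂ)) : c • f.restrict M - TM (f.restrict M) =
          (c • f - T f).restrict M := by
        ext k
        simp [hTM, hT]
      have hL_apply (f : C(K, ℂ)) : c • f.restrict L - TL (f.restrict L) =
          (c • f - T f).restrict L := by
        ext k
        simp [hTL, hT]
      refine notMem_spectrum_iff_bijective.2 ⟨fun f₁ f₂ hf₁₂ => ?_, fun g => ?_⟩
      · have h : c • f₁ - T f₁ = c • f₂ - T f₂ := hf₁₂
        have hfM : f₁.restrict M = f₂.restrict M := hcM.1 (by simp only [hM_apply, h])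
        have hfL : f₁.restrict L = f₂.restrict L := hcL.1 (by simp only [hL_apply, h])
        ext k
        rcases (hcover.symm ▸ Set.mem_univ k : k ∈ M ∪ L) with hk | hk
        · exact DFunLike.congr_fun hfM ⟨k, hk⟩
        · exact DFunLike.congr_fun hfL ⟨k, hk⟩
      · obtain ⟨fM, hfM⟩ := hcM.2 (g.restrict M)
        obtain ⟨fL, hfL⟩ := hcL.2 (g.restrict L)
        have hfM' (k : K) (hk : k ∈ M) : c * fM ⟨k, hk⟩ - w k * fM ⟨φ k, hφM k hk⟩ = g k := by
          simpa [hTM] using DFunLike.congr_fun hfM ⟨k, hk⟩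
        have hfL' (k : K) (hk : k ∈ L) : c * fL ⟨k, hk⟩ - w k * fL ⟨φ k, hφL k hk⟩ = g k := by
          simpa [hTL] using DFunLike.congr_fun hfL ⟨k, hk⟩
        obtain ⟨E, hE⟩ := ContinuousMap.exists_restrict_eq hMclosed fM
        have hEf (k : K) (hk : k ∈ M) : E k = fM ⟨k, hk⟩ := DFunLike.congr_fun hE ⟨k, hk⟩
        have hdiff := hzero hdecay (f := E.restrict L - fL) fun k hk => by
          simp only [ContinuousMap.sub_apply, ContinuousMap.restrict_apply]
          rw [hEf k hk.1, hEf _ (hφM k hk.1)]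
          linear_combination hfM' k hk.1 - hfL' k hk.2
        obtain ⟨F, hFM, hFL⟩ := ContinuousMap.exists_glue_of_isClosed hMclosed hLclosed hcover
          fM fL fun k hkM hkL => by
            rw [← hEf k hkM]
            exact sub_eq_zero.1 (hdiff k ⟨hkM, hkL⟩)
        refine ⟨F, ?_⟩
        ext k
        simp only [ContinuousMap.sub_apply, ContinuousMap.smul_apply, smul_eq_mul, hT]
        rcases (hcover.symm ▸ Set.mem_univ k : k ∈ M ∪ L) with hk | hk
        · rw [hFM ⟨k, hk⟩, hFM ⟨φ k, hφM k hk⟩, hfM' k hk]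
        · rw [hFL ⟨k, hk⟩, hFL ⟨φ k, hφL k hk⟩, hfL' k hk]
  ext c
  rw [Set.mem_union, ← not_iff_not, hiff, not_or]
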